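/- arXiv:1402.6150 — 12 statements merged into one kernel-verified Lean document; each statement's English description precedes it below -/
import Mathlib

section
/- Let p be a prime, q ≥ 2 an integer, θ ∈ ℚ_p, and z = (z_1, …, z_{q−1}) ∈ ℚ_p^{q−1}. Suppose θ + Σ_{j=1}^{q−1} z_j ≠ 0 and that for every i ∈ {1, …, q−1} one has z_i = ( ((θ−1)·z_i + Σ_{j=1}^{q−1} z_j + 1) / (θ + Σ_{j=1}^{q−1} z_j) )². Then there exists z* ∈ ℚ_p such that every component satisfies z_i = 1 or z_i = z*; equivalently, there is a subset M ⊆ {1, …, q−1} with z_i = 1 for i ∉ M and z_i = z* for i ∈ M. -/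
/-!
Put `a = θ - 1` and `b = 1 + ∑ z_j`, so that the denominator is `a + b`. Each component `x = z_i`
satisfies `(a + b)² x = (a x + b)²`, which factors as `(x - 1) (a² x - b²) = 0`. Hence `x = 1` or
`x = b² / a²`, a value independent of `i`. If `a = 0`, the denominator is `b ≠ 0`, so the second
factor cannot vanish and every component equals `1`.
-/


/-- Theorem 2 (k = 2): any solution of the translation-invariant fixed point
system for the `q`-state Potts model on the Cayley tree of order 2 has all
components equal to `1` or to a common value `z*`. -/
theorem potts_fixed_point_two_values (p : ℕ) [Fact p.Prime] (q : ℕ) (hq : 2 ≤ q)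
    (θ : ℚ_[p]) (z : Fin (q - 1) → ℚ_[p])
    (hden : θ + ∑ j, z j ≠ 0)
    (hfix : ∀ i, z i = (((θ - 1) * z i + (∑ j, z j) + 1) / (θ + ∑ j, z j)) ^ 2) :
    ∃ zstar : ℚ_[p], ∀ i, z i = 1 ∨ z i = zstar := by
  refine ⟨((∑ j, z j) + 1) ^ 2 / (θ - 1) ^ 2, fun i => ?_⟩
  have h := hfix i
  generalize (∑ j, z j) = S at *
  rw [div_pow, eq_div_iff (pow_ne_zero 2 hden)] at h
  have hfac : (z i - 1) * ((θ - 1) ^ 2 * z i - (S + 1) ^ 2) = 0 := by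
    linear_combination -h
  rcases mul_eq_zero.mp hfac with h1 | h2
  · exact Or.inl (sub_eq_zero.mp h1)
  · have ha : θ - 1 ≠ 0 := by
      intro ha
      rw [ha] at h2
      have hb : S + 1 = 0 := pow_eq_zero_iff (two_ne_zero) |>.mp (by linear_combination -h2)
      exact hden (by linear_combination ha + hb)
    right
    rw [eq_div_iff (pow_ne_zero 2 ha)]
    linear_combination h2
end

section
/- Let p be a prime, q ≥ 2 and 1 ≤ m ≤ q−1 integers, θ ∈ ℚ_p, and define f_m(x) = ( ((θ+m−1)x + (q−m)) / (m·x + (q−m−1) + θ) )². If z ∈ ℚ_p satisfies z ≠ 0, m·z + (q−m−1) + θ ≠ 0, (θ+m−1)·z + (q−m) ≠ 0, and z = f_m(z), then z⁻¹ satisfies z⁻¹ = f_{q−m}(z⁻¹); that is, if z is a solution of the fixed-point equation with parameter m, then z⁻¹ is a solution of the fixed-point equation with parameter q − m. (This rests on the identity f_m(x) = 1 / f_{q−m}(x⁻¹).) -/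
/-- Lemma 1: if `z` is a solution of the fixed point equation `z = f_m(z)` then
`z⁻¹` is a solution of the fixed point equation with parameter `q - m`. -/
theorem potts_fixed_point_inverse (p : ℕ) [Fact p.Prime] (q m : ℕ)
    (hq : 2 ≤ q) (hm1 : 1 ≤ m) (hm2 : m ≤ q - 1)
    (θ z : ℚ_[p]) (hz : z ≠ 0)
    (hden : (m : ℚ_[p]) * z + ((q : ℚ_[p]) - m - 1) + θ ≠ 0)
    (hnum : (θ + m - 1) * z + ((q : ℚ_[p]) - m) ≠ 0)
    (hfix : z = (((θ + m - 1) * z + ((q : ℚ_[p]) - m)) /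
      ((m : ℚ_[p]) * z + ((q : ℚ_[p]) - m - 1) + θ)) ^ 2) :
    z⁻¹ = (((θ + ((q : ℚ_[p]) - m) - 1) * z⁻¹ + (m : ℚ_[p])) /
      (((q : ℚ_[p]) - m) * z⁻¹ + ((m : ℚ_[p]) - 1) + θ)) ^ 2 := by
  -- Multiplying through by `z`, numerator and denominator of `f_{q-m}(z⁻¹)` become the
  -- denominator and numerator of `f_m(z)`, so `f_{q-m}(z⁻¹) = (f_m(z))⁻¹`.
  have hN : (θ + ((q : ℚ_[p]) - m) - 1) * z⁻¹ + (m : ℚ_[p]) =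
      z⁻¹ * ((m : ℚ_[p]) * z + ((q : ℚ_[p]) - m - 1) + θ) := by
    field_simp
    ring
  have hD : ((q : ℚ_[p]) - m) * z⁻¹ + ((m : ℚ_[p]) - 1) + θ =
      z⁻¹ * ((θ + m - 1) * z + ((q : ℚ_[p]) - m)) := by
    field_simp
    ring
  rw [hN, hD, mul_div_mul_left _ _ (inv_ne_zero hz), ← inv_div, inv_pow, ← hfix]
end

section
/- Let p be a prime, q ≥ 2 and 1 ≤ m ≤ q−1 integers, θ ∈ ℚ_p, and let z ∈ ℚ_p satisfy z ≠ 1 and m·z + (q−m−1) + θ ≠ 0. Then z = ( ((θ+m−1)z + (q−m)) / (m·z + (q−m−1) + θ) )² if and only if m²·z² + (2m(q−m) − (θ−1)²)·z + (q−m)² = 0. -/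
/-- For `z ≠ 1` (with nonzero denominator) the fixed point equation
`z = f_m(z)` is equivalent to the quadratic equation (kv). -/
theorem potts_fixed_point_iff_quadratic (p : ℕ) [Fact p.Prime] (q m : ℕ)
    (hq : 2 ≤ q) (hm1 : 1 ≤ m) (hm2 : m ≤ q - 1)
    (θ z : ℚ_[p]) (hz : z ≠ 1)
    (hden : (m : ℚ_[p]) * z + ((q : ℚ_[p]) - m - 1) + θ ≠ 0) :
    z = (((θ + m - 1) * z + ((q : ℚ_[p]) - m)) /
      ((m : ℚ_[p]) * z + ((q : ℚ_[p]) - m - 1) + θ)) ^ 2 ↔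
    (m : ℚ_[p]) ^ 2 * z ^ 2 +
      (2 * (m : ℚ_[p]) * ((q : ℚ_[p]) - m) - (θ - 1) ^ 2) * z +
      ((q : ℚ_[p]) - m) ^ 2 = 0 := by
  -- With `A = m z + (q - m)` and `t = θ - 1`, the cross-multiplied equation factors as
  -- `z (A + t)² - (t z + A)² = (z - 1) (A² - t² z)`, and `A² - t² z` is the quadratic.
  have key : z * ((m : ℚ_[p]) * z + ((q : ℚ_[p]) - m - 1) + θ) ^ 2 -
      ((θ + m - 1) * z + ((q : ℚ_[p]) - m)) ^ 2 =
      (z - 1) * ((m : ℚ_[p]) ^ 2 * z ^ 2 +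
        (2 * (m : ℚ_[p]) * ((q : ℚ_[p]) - m) - (θ - 1) ^ 2) * z +
        ((q : ℚ_[p]) - m) ^ 2) := by
    ring
  rw [div_pow, eq_div_iff (pow_ne_zero 2 hden), ← sub_eq_zero, key, mul_eq_zero,
    or_iff_right (sub_ne_zero.mpr hz)]
end

section
/- Let p be an odd prime, let q ≥ 2 be an integer not divisible by p, and let θ ∈ ℚ_p satisfy |θ − 1|_p ≤ 1/p. Then for every integer m with 1 ≤ m ≤ q−1, the equation m²·z² + (2m(q−m) − (θ−1)²)·z + (q−m)² = 0 has no solution z ∈ ℚ_p with 0 < |z − 1|_p < 1. -/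
/-!
The quadratic (kv) is `(m z + (q - m))² = (θ - 1)² z`, that is,
`(q + m (z - 1))² = (θ - 1)² z`. When `‖z - 1‖ < 1` and `p ∤ q`, the left side has norm `1`, as
`‖q‖ = 1` and `‖m (z - 1)‖ < 1`, while the right side has norm less than `1`, as `‖θ - 1‖ < 1`
and `‖z‖ ≤ 1`.
-/

/-- Proposition: for odd `p` and `q` not divisible by `p`, the quadratic
equation (kv) has no solution `z` with `0 < ‖z - 1‖ < 1`. -/
theorem kv_no_solution_of_not_dvd (p : ℕ) [Fact p.Prime] (hp : p ≠ 2)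
    (q : ℕ) (hq : 2 ≤ q) (hpq : ¬ (p ∣ q))
    (θ : ℚ_[p]) (hθ : ‖θ - 1‖ ≤ 1 / p)
    (m : ℕ) (hm1 : 1 ≤ m) (hm2 : m ≤ q - 1) :
    ¬ ∃ z : ℚ_[p],
      ((m : ℚ_[p]) ^ 2 * z ^ 2 +
        (2 * (m : ℚ_[p]) * ((q : ℚ_[p]) - m) - (θ - 1) ^ 2) * z +
        ((q : ℚ_[p]) - m) ^ 2 = 0) ∧
      0 < ‖z - 1‖ ∧ ‖z - 1‖ < 1 := by
  rintro ⟨z, hz, -, hz1⟩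
  have hint (n : ℕ) : ‖(n : ℚ_[p])‖ ≤ 1 := by
    simpa using Padic.norm_int_le_one (p := p) (n : ℤ)
  have hqn : ‖(q : ℚ_[p])‖ = 1 := by
    refine le_antisymm (hint q) (not_lt.1 fun h => hpq ?_)
    have := (Padic.norm_intCast_lt_one_iff (p := p) (k := (q : ℤ))).1 (by simpa using h)
    exact_mod_cast this
  have hθ1 : ‖θ - 1‖ < 1 := by
    refine hθ.trans_lt ?_
    have h1 : (1 : ℝ) < p := by exact_mod_cast (Fact.out : p.Prime).one_lt
    rw [div_lt_one (by linarith)]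
    exact h1
  have hzn : ‖z‖ ≤ 1 := by
    have h := Padic.nonarchimedean (z - 1) 1
    rw [sub_add_cancel, norm_one] at h
    exact h.trans (max_le hz1.le le_rfl)
  have hmw : ‖(m : ℚ_[p]) * (z - 1)‖ < 1 := by
    rw [norm_mul]
    exact (mul_le_of_le_one_left (norm_nonneg _) (hint m)).trans_lt hz1
  have hL : ‖(q : ℚ_[p]) + m * (z - 1)‖ = 1 := by
    rw [Padic.add_eq_max_of_ne (by rw [hqn]; exact hmw.ne'), hqn, max_eq_left hmw.le]
  have hE : ((q : ℚ_[p]) + m * (z - 1)) ^ 2 = (θ - 1) ^ 2 * z := by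
    linear_combination hz
  have hN := congrArg norm hE
  rw [norm_pow, hL, norm_mul, norm_pow, one_pow] at hN
  have h2 : ‖θ - 1‖ ^ 2 < 1 := pow_lt_one₀ (norm_nonneg _) hθ1 two_ne_zero
  have h3 : ‖θ - 1‖ ^ 2 * ‖z‖ ≤ ‖θ - 1‖ ^ 2 := mul_le_of_le_one_right (by positivity) hzn
  linarith
end

section
/- Let p be an odd prime, let q ≥ 2 be an integer divisible by p, let θ = 1 + q or θ = 1 − q (in ℚ_p), and let m be an integer with 1 ≤ m ≤ q−1. Then for the equation m²·z² + (2m(q−m) − (θ−1)²)·z + (q−m)² = 0: (1) if |m|_p > |q|_p, it has exactly one solution z with 0 < |z−1|_p < 1, namely z = ((q−m)/m)²; (2) if |m|_p < |q|_p, it has no such solution; (3) if |m|_p = |q|_p and either q = 2m or |q − 2m|_p = |q|_p, it has no such solution; (4) if |m|_p = |q|_p and 0 < |q − 2m|_p < |q|_p, it has exactly one such solution, namely z = ((q−m)/m)². -/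
/-!
For `θ = 1 ± q` the coefficient `(θ - 1) ^ 2` equals `q ^ 2`, and (kv) factors as
`(z - 1) * (m ^ 2 * z - (q - m) ^ 2) = 0`. Hence the only root other than `1` can be
`w = ((q - m) / m) ^ 2`, and `w - 1 = q * (q - 2 * m) / m ^ 2`. So `0 < ‖w - 1‖ < 1` amounts to
`0 < ‖q‖ * ‖q - 2 * m‖ < ‖m‖ ^ 2`. Since `p` is odd, `‖2 * m‖ = ‖m‖`, and the ultrametric inequality
gives `‖q - 2 * m‖ = max ‖q‖ ‖m‖` as soon as `‖m‖ ≠ ‖q‖`.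
-/

/-- The solutions of (kv) with `0 < ‖z - 1‖ < 1`, with the distance of the second root from `1`
cleared of denominators. -/
lemma kv_solution_iff (p : ℕ) [Fact p.Prime] {θ q m : ℚ_[p]}
    (hθ : θ = 1 + q ∨ θ = 1 - q) (hm : m ≠ 0) (z : ℚ_[p]) :
    ((m ^ 2 * z ^ 2 + (2 * m * (q - m) - (θ - 1) ^ 2) * z + (q - m) ^ 2 = 0) ∧
      0 < ‖z - 1‖ ∧ ‖z - 1‖ < 1) ↔
    z = ((q - m) / m) ^ 2 ∧ 0 < ‖q‖ * ‖q - 2 * m‖ ∧ ‖q‖ * ‖q - 2 * m‖ < ‖m‖ ^ 2 := by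
  have hsq : (θ - 1) ^ 2 = q ^ 2 := by rcases hθ with rfl | rfl <;> ring
  have hfac : m ^ 2 * z ^ 2 + (2 * m * (q - m) - (θ - 1) ^ 2) * z + (q - m) ^ 2
      = (z - 1) * (m ^ 2 * z - (q - m) ^ 2) := by rw [hsq]; ring
  have hm2 : 0 < ‖m‖ ^ 2 := by positivity
  have hnorm : ‖((q - m) / m) ^ 2 - 1‖ = ‖q‖ * ‖q - 2 * m‖ / ‖m‖ ^ 2 := by
    have : ((q - m) / m) ^ 2 - 1 = q * (q - 2 * m) / m ^ 2 := by field_simp; ring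
    rw [this, norm_div, norm_mul, norm_pow]
  have hroot : m ^ 2 * z - (q - m) ^ 2 = 0 ↔ z = ((q - m) / m) ^ 2 := by
    rw [div_pow, eq_div_iff (pow_ne_zero 2 hm), sub_eq_zero, mul_comm]
  have hbounds : (0 < ‖q‖ * ‖q - 2 * m‖ ∧ ‖q‖ * ‖q - 2 * m‖ < ‖m‖ ^ 2) ↔
      (0 < ‖((q - m) / m) ^ 2 - 1‖ ∧ ‖((q - m) / m) ^ 2 - 1‖ < 1) := by
    rw [hnorm, div_lt_one hm2, div_pos_iff_of_pos_right hm2]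
  rw [hfac, hbounds]
  constructor
  · rintro ⟨h, h0, h1⟩
    have hz := hroot.1 ((mul_eq_zero.1 h).resolve_left (norm_pos_iff.1 h0))
    exact ⟨hz, hz ▸ h0, hz ▸ h1⟩
  · rintro ⟨hz, h0, h1⟩
    exact ⟨by rw [hroot.2 hz, mul_zero], by rwa [hz], by rwa [hz]⟩

lemma padic_norm_two_mul (p : ℕ) [Fact p.Prime] (hp : p ≠ 2) (x : ℚ_[p]) :
    ‖2 * x‖ = ‖x‖ := by
  have h2 : ‖((2 : ℕ) : ℚ_[p])‖ = 1 :=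
    Padic.norm_natCast_eq_one_iff.2
      ((Nat.coprime_primes (Fact.out : p.Prime) Nat.prime_two).2 hp)
  rw [norm_mul, ← Nat.cast_ofNat (R := ℚ_[p]), h2, one_mul]


/-- Proposition: for odd `p`, `p ∣ q` and `θ ∈ {1 + q, 1 - q}`, the solvability
of the quadratic equation (kv) in `{z : 0 < ‖z - 1‖ < 1}` is as follows. -/
theorem kv_solutions_theta_special (p : ℕ) [Fact p.Prime] (hp : p ≠ 2)
    (q : ℕ) (hq : 2 ≤ q) (hpq : p ∣ q)
    (θ : ℚ_[p]) (hθ : θ = 1 + q ∨ θ = 1 - q)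
    (m : ℕ) (hm1 : 1 ≤ m) (hm2 : m ≤ q - 1) :
    (‖(m : ℚ_[p])‖ > ‖(q : ℚ_[p])‖ →
      ∀ z : ℚ_[p],
        ((((m : ℚ_[p]) ^ 2 * z ^ 2 +
          (2 * (m : ℚ_[p]) * ((q : ℚ_[p]) - m) - (θ - 1) ^ 2) * z +
          ((q : ℚ_[p]) - m) ^ 2 = 0) ∧ 0 < ‖z - 1‖ ∧ ‖z - 1‖ < 1) ↔
        z = (((q : ℚ_[p]) - m) / m) ^ 2)) ∧
    (‖(m : ℚ_[p])‖ < ‖(q : ℚ_[p])‖ →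
      ¬ ∃ z : ℚ_[p],
        (((m : ℚ_[p]) ^ 2 * z ^ 2 +
          (2 * (m : ℚ_[p]) * ((q : ℚ_[p]) - m) - (θ - 1) ^ 2) * z +
          ((q : ℚ_[p]) - m) ^ 2 = 0) ∧ 0 < ‖z - 1‖ ∧ ‖z - 1‖ < 1)) ∧
    (‖(m : ℚ_[p])‖ = ‖(q : ℚ_[p])‖ →
      (q = 2 * m ∨ ‖(q : ℚ_[p]) - 2 * m‖ = ‖(q : ℚ_[p])‖) →
      ¬ ∃ z : ℚ_[p],
        (((m : ℚ_[p]) ^ 2 * z ^ 2 +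
          (2 * (m : ℚ_[p]) * ((q : ℚ_[p]) - m) - (θ - 1) ^ 2) * z +
          ((q : ℚ_[p]) - m) ^ 2 = 0) ∧ 0 < ‖z - 1‖ ∧ ‖z - 1‖ < 1)) ∧
    (‖(m : ℚ_[p])‖ = ‖(q : ℚ_[p])‖ →
      0 < ‖(q : ℚ_[p]) - 2 * m‖ → ‖(q : ℚ_[p]) - 2 * m‖ < ‖(q : ℚ_[p])‖ →
      ∀ z : ℚ_[p],
        ((((m : ℚ_[p]) ^ 2 * z ^ 2 +
          (2 * (m : ℚ_[p]) * ((q : ℚ_[p]) - m) - (θ - 1) ^ 2) * z +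
          ((q : ℚ_[p]) - m) ^ 2 = 0) ∧ 0 < ‖z - 1‖ ∧ ‖z - 1‖ < 1) ↔
        z = (((q : ℚ_[p]) - m) / m) ^ 2)) := by
  have hm : (m : ℚ_[p]) ≠ 0 := by exact_mod_cast (by omega : m ≠ 0)
  have hq0 : (q : ℚ_[p]) ≠ 0 := by exact_mod_cast (by omega : q ≠ 0)
  have ha : 0 < ‖(q : ℚ_[p])‖ := norm_pos_iff.2 hq0
  have hb : 0 < ‖(m : ℚ_[p])‖ := norm_pos_iff.2 hm
  have h2 : ‖2 * (m : ℚ_[p])‖ = ‖(m : ℚ_[p])‖ := padic_norm_two_mul p hp _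
  have hmax : ‖(m : ℚ_[p])‖ ≠ ‖(q : ℚ_[p])‖ →
      ‖(q : ℚ_[p]) - 2 * m‖ = max ‖(q : ℚ_[p])‖ ‖(m : ℚ_[p])‖ := by
    intro hne
    rw [sub_eq_add_neg, IsUltrametricDist.norm_add_eq_max_of_norm_ne_norm, norm_neg, h2]
    rw [norm_neg, h2]
    exact hne.symm
  simp only [kv_solution_iff p hθ hm]
  refine ⟨fun h z => and_iff_left ?_, ?_, ?_, fun h h0 h1 z => and_iff_left ?_⟩
  · rw [hmax h.ne', max_eq_right h.le]
    exact ⟨by positivity, by nlinarith⟩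
  · rintro h ⟨z, -, -, h1⟩
    rw [hmax h.ne, max_eq_left h.le] at h1
    nlinarith
  · rintro h (h0 | hc) ⟨z, -, hpos, h1⟩
    · have : (q : ℚ_[p]) - 2 * m = 0 := by rw [h0]; push_cast; ring
      simp [this] at hpos
    · rw [hc, h] at h1
      nlinarith
  · rw [h]
    exact ⟨by positivity, by nlinarith⟩
end

section
/- Let p be an odd prime, let q ≥ 2 be an integer divisible by p, let θ ∈ ℚ_p satisfy |θ−1|_p ≤ 1/p, θ ≠ 1+q and θ ≠ 1−q, and let m be an integer with 1 ≤ m ≤ q−1. If |θ−1|_p > max{|m|_p, |q|_p}, or if |q|_p > max{|m|_p, |θ−1|_p}, then the equation m²·z² + (2m(q−m) − (θ−1)²)·z + (q−m)² = 0 has no solution z ∈ ℚ_p with 0 < |z−1|_p < 1. -/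
/-!
Completing the square turns the quadratic into `(m (z - 1) + q) ^ 2 = (θ - 1) ^ 2 * z`.
If `‖z - 1‖ < 1`, then `‖z‖ = 1`, so any solution satisfies
`‖m (z - 1) + q‖ = ‖θ - 1‖`, whereas `‖m (z - 1)‖ ≤ ‖m‖`. By the ultrametric inequality the
left side is at most `max ‖m‖ ‖q‖`, and it equals `‖q‖` when `‖m‖ < ‖q‖`; these two facts
contradict the two norm hypotheses respectively.
-/

/-- Proposition 8(2),(3): for odd `p`, `p ∣ q`, `θ ∉ {1 ± q}`, if
`‖θ - 1‖ > max {‖m‖, ‖q‖}` or `‖q‖ > max {‖m‖, ‖θ - 1‖}` then (kv) has no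
solution in `{z : 0 < ‖z - 1‖ < 1}`. -/
theorem kv_no_solution_cases23 (p : ℕ) [Fact p.Prime] (hp : p ≠ 2)
    (q : ℕ) (hq : 2 ≤ q) (hpq : p ∣ q)
    (θ : ℚ_[p]) (hθ : ‖θ - 1‖ ≤ 1 / p)
    (hθ1 : θ ≠ 1 + q) (hθ2 : θ ≠ 1 - q)
    (m : ℕ) (hm1 : 1 ≤ m) (hm2 : m ≤ q - 1)
    (hnorm : ‖θ - 1‖ > max ‖(m : ℚ_[p])‖ ‖(q : ℚ_[p])‖ ∨
             ‖(q : ℚ_[p])‖ > max ‖(m : ℚ_[p])‖ ‖θ - 1‖) :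
    ¬ ∃ z : ℚ_[p],
      ((m : ℚ_[p]) ^ 2 * z ^ 2 +
        (2 * (m : ℚ_[p]) * ((q : ℚ_[p]) - m) - (θ - 1) ^ 2) * z +
        ((q : ℚ_[p]) - m) ^ 2 = 0) ∧
      0 < ‖z - 1‖ ∧ ‖z - 1‖ < 1 := by
  rintro ⟨z, hz, -, hz1⟩
  have hfac : ((m : ℚ_[p]) * (z - 1) + q) ^ 2 = (θ - 1) ^ 2 * z := by
    linear_combination hz
  have hz_norm : ‖z‖ = 1 := by
    have hne : ‖z - 1‖ ≠ ‖(1 : ℚ_[p])‖ := by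
      rw [norm_one]
      exact hz1.ne
    have h := IsUltrametricDist.norm_add_eq_max_of_norm_ne_norm hne
    rwa [sub_add_cancel, norm_one, max_eq_right hz1.le] at h
  have hkey : ‖(m : ℚ_[p]) * (z - 1) + q‖ = ‖θ - 1‖ := by
    have h := congrArg norm hfac
    rw [norm_mul, norm_pow, norm_pow, hz_norm, mul_one] at h
    exact (pow_left_inj₀ (norm_nonneg _) (norm_nonneg _) two_ne_zero).1 h
  have hmw : ‖(m : ℚ_[p]) * (z - 1)‖ ≤ ‖(m : ℚ_[p])‖ := by
    rw [norm_mul]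
    exact mul_le_of_le_one_right (norm_nonneg _) hz1.le
  rcases hnorm with h | h
  · have hle := IsUltrametricDist.norm_add_le_max ((m : ℚ_[p]) * (z - 1)) (q : ℚ_[p])
    rw [hkey] at hle
    exact absurd (hle.trans (max_le_max_right _ hmw)) (not_le.2 h)
  · obtain ⟨hmq, hθq⟩ := max_lt_iff.1 h
    have hlt := hmw.trans_lt hmq
    have heq := IsUltrametricDist.norm_add_eq_max_of_norm_ne_norm hlt.ne
    rw [hkey, max_eq_right hlt.le] at heq
    exact hθq.ne heq
end

section
/- Let p be an odd prime, let q ≥ 2 be an integer divisible by p, let θ ∈ ℚ_p satisfy |θ−1|_p ≤ 1/p, θ ≠ 1+q and θ ≠ 1−q, and let m be an integer with 1 ≤ m ≤ q−1. If |q|_p < |m|_p = |θ−1|_p, or if |θ−1|_p < |q|_p = |m|_p, then the equation m²·z² + (2m(q−m) − (θ−1)²)·z + (q−m)² = 0 has no solution z ∈ ℚ_p with 0 < |z−1|_p < 1. -/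
/-!
Completing the square turns the quadratic into `(m (z - 1) + q)² = (θ - 1)² z`. If `‖z - 1‖ < 1`
then `‖z‖ = 1`, so `‖m (z - 1) + q‖ = ‖θ - 1‖`. Since `‖m (z - 1)‖ < ‖m‖`, the ultrametric
inequality makes the left side smaller than `‖m‖ = ‖θ - 1‖` in the first case, and equal to
`‖q‖ > ‖θ - 1‖` in the second.
-/

/-- Proposition 8(4),(5): for odd `p`, `p ∣ q`, `θ ∉ {1 ± q}`, if
`‖q‖ < ‖m‖ = ‖θ - 1‖` or `‖θ - 1‖ < ‖q‖ = ‖m‖` then (kv) has no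
solution in `{z : 0 < ‖z - 1‖ < 1}`. -/
theorem kv_no_solution_cases45 (p : ℕ) [Fact p.Prime] (hp : p ≠ 2)
    (q : ℕ) (hq : 2 ≤ q) (hpq : p ∣ q)
    (θ : ℚ_[p]) (hθ : ‖θ - 1‖ ≤ 1 / p)
    (hθ1 : θ ≠ 1 + q) (hθ2 : θ ≠ 1 - q)
    (m : ℕ) (hm1 : 1 ≤ m) (hm2 : m ≤ q - 1)
    (hnorm : (‖(q : ℚ_[p])‖ < ‖(m : ℚ_[p])‖ ∧ ‖(m : ℚ_[p])‖ = ‖θ - 1‖) ∨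
             (‖θ - 1‖ < ‖(q : ℚ_[p])‖ ∧ ‖(q : ℚ_[p])‖ = ‖(m : ℚ_[p])‖)) :
    ¬ ∃ z : ℚ_[p],
      ((m : ℚ_[p]) ^ 2 * z ^ 2 +
        (2 * (m : ℚ_[p]) * ((q : ℚ_[p]) - m) - (θ - 1) ^ 2) * z +
        ((q : ℚ_[p]) - m) ^ 2 = 0) ∧
      0 < ‖z - 1‖ ∧ ‖z - 1‖ < 1 := by
  rintro ⟨z, hz, -, hw⟩
  have key : ((m : ℚ_[p]) * (z - 1) + q) ^ 2 = (θ - 1) ^ 2 * z := by linear_combination hz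
  have hz1 : ‖z‖ = 1 := by
    have h := IsUltrametricDist.norm_add_eq_max_of_norm_ne_norm
      (x := z - 1) (y := (1 : ℚ_[p])) (by rw [norm_one]; exact hw.ne)
    rwa [sub_add_cancel, norm_one, max_eq_right hw.le] at h
  have hn : ‖(m : ℚ_[p]) * (z - 1) + q‖ = ‖θ - 1‖ := by
    have h := congrArg norm key
    rw [norm_mul, norm_pow, norm_pow, hz1, mul_one] at h
    exact (pow_left_inj₀ (norm_nonneg _) (norm_nonneg _) two_ne_zero).1 h
  have hm : 0 < ‖(m : ℚ_[p])‖ := norm_pos_iff.2 (by exact_mod_cast (by omega : m ≠ 0))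
  have hmw : ‖(m : ℚ_[p]) * (z - 1)‖ < ‖(m : ℚ_[p])‖ := by
    rw [norm_mul]
    exact mul_lt_of_lt_one_right hm hw
  rcases hnorm with ⟨h1, h2⟩ | ⟨h1, h2⟩
  · have h := IsUltrametricDist.norm_add_le_max ((m : ℚ_[p]) * (z - 1)) (q : ℚ_[p])
    rw [hn, ← h2] at h
    exact absurd h (not_le.2 (max_lt hmw h1))
  · rw [← h2] at hmw
    have h := IsUltrametricDist.norm_add_eq_max_of_norm_ne_norm hmw.ne
    rw [hn, max_eq_right hmw.le] at h
    exact h1.ne h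
end

section
/- Let p be an odd prime, let q ≥ 2 be an integer divisible by p, let θ ∈ ℚ_p satisfy |θ−1|_p ≤ 1/p, θ ≠ 1+q and θ ≠ 1−q, and let m be an integer with 1 ≤ m ≤ q−1 such that |m|_p < |θ−1|_p = |q|_p. Then for the equation m²·z² + (2m(q−m) − (θ−1)²)·z + (q−m)² = 0: if |(θ−1)² − q²|_p < |q|_p², it has exactly one solution z ∈ ℚ_p with 0 < |z−1|_p < 1; if |(θ−1)² − q²|_p = |q|_p², it has no solution z with 0 < |z−1|_p < 1. -/
/-!
With `t = θ - 1`, the equation reads `(q + m (z - 1))² = t² z`. Dividing by `t²` and writing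
`w = z - 1`, `a = m / t`, `b = q / t`, it becomes `a² w² + (2ab - 1) w + (b² - 1) = 0`, where
`‖a‖ < 1` and `‖b‖ = 1`. The coefficients lie in `ℤ_[p]` and the linear one is a unit, so by
Hensel's lemma at `w = 0` there is exactly one root with `‖w‖ < 1` when `‖b² - 1‖ < 1`; this root
is nonzero because `t ≠ ±q`. Conversely a root with `‖w‖ < 1` forces `‖b² - 1‖ < 1` by the
ultrametric inequality.
-/

open Polynomial in
/-- Hensel's lemma for the normalised quadratic, whose derivative at `0` is the unit `2ab - 1`. -/
lemma existsUnique_small_root (p : ℕ) [Fact p.Prime] (a b : ℤ_[p]) (ha : ‖a‖ < 1)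
    (hb : ‖b ^ 2 - 1‖ < 1) :
    ∃! w : ℤ_[p], a ^ 2 * w ^ 2 + (2 * a * b - 1) * w + (b ^ 2 - 1) = 0 ∧ ‖w‖ < 1 := by
  have hunit : ‖2 * a * b - 1‖ = 1 := by
    have h1 : ‖2 * a * b‖ < 1 := by
      have e : 2 * a * b = a * (2 * b) := by ring
      rw [e, norm_mul]
      exact (mul_le_of_le_one_right (norm_nonneg _) (PadicInt.norm_le_one _)).trans_lt ha
    rw [sub_eq_add_neg, PadicInt.norm_add_eq_max_of_ne (by rw [norm_neg, norm_one]; exact h1.ne),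
      norm_neg, norm_one, max_eq_right h1.le]
  set F : ℤ_[p][X] := C (a ^ 2) * X ^ 2 + C (2 * a * b - 1) * X + C (b ^ 2 - 1) with hF
  have hev (w : ℤ_[p]) :
      F.aeval w = a ^ 2 * w ^ 2 + (2 * a * b - 1) * w + (b ^ 2 - 1) := by
    rw [coe_aeval_eq_eval, hF]
    simp only [eval_add, eval_mul, eval_C, eval_pow, eval_X]
  have hd : F.derivative.aeval (0 : ℤ_[p]) = 2 * a * b - 1 := by
    rw [coe_aeval_eq_eval, hF]
    simp only [derivative_add, derivative_C_mul, derivative_X_pow, derivative_X, derivative_C,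
      eval_add, eval_mul, eval_C, eval_pow, eval_X, eval_one, eval_zero]
    simp
  obtain ⟨w, h0, h1, -, h3⟩ := hensels_lemma (F := F) (a := (0 : ℤ_[p])) (by
    rw [hd, hunit, hev]; simpa using hb)
  rw [hd, hunit] at h1 h3
  refine ⟨w, ⟨by rw [← hev]; exact h0, by simpa using h1⟩, ?_⟩
  rintro v ⟨hv, hv1⟩
  exact h3 v (by rw [hev]; exact hv) (by simpa using hv1)

/-- A root in the open unit disc makes the constant term `b² - 1` small. -/
lemma norm_const_lt_one (p : ℕ) [Fact p.Prime] (a b w : ℤ_[p]) (hw : ‖w‖ < 1)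
    (h : a ^ 2 * w ^ 2 + (2 * a * b - 1) * w + (b ^ 2 - 1) = 0) : ‖b ^ 2 - 1‖ < 1 := by
  have e : b ^ 2 - 1 = w * (-(a ^ 2 * w + (2 * a * b - 1))) := by linear_combination h
  rw [e, norm_mul]
  exact (mul_le_of_le_one_right (norm_nonneg _) (PadicInt.norm_le_one _)).trans_lt hw


/-- Proposition 8(6),(7): for odd `p`, `p ∣ q`, `θ ∉ {1 ± q}` and
`‖m‖ < ‖θ - 1‖ = ‖q‖`: if `‖(θ-1)² - q²‖ < ‖q‖²` then (kv) has exactly one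
solution with `0 < ‖z - 1‖ < 1`, and if `‖(θ-1)² - q²‖ = ‖q‖²` it has none. -/
theorem kv_solutions_cases67 (p : ℕ) [Fact p.Prime] (hp : p ≠ 2)
    (q : ℕ) (hq : 2 ≤ q) (hpq : p ∣ q)
    (θ : ℚ_[p]) (hθ : ‖θ - 1‖ ≤ 1 / p)
    (hθ1 : θ ≠ 1 + q) (hθ2 : θ ≠ 1 - q)
    (m : ℕ) (hm1 : 1 ≤ m) (hm2 : m ≤ q - 1)
    (hnorm : ‖(m : ℚ_[p])‖ < ‖θ - 1‖ ∧ ‖θ - 1‖ = ‖(q : ℚ_[p])‖) :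
    (‖(θ - 1) ^ 2 - (q : ℚ_[p]) ^ 2‖ < ‖(q : ℚ_[p])‖ ^ 2 →
      ∃! z : ℚ_[p],
        ((m : ℚ_[p]) ^ 2 * z ^ 2 +
          (2 * (m : ℚ_[p]) * ((q : ℚ_[p]) - m) - (θ - 1) ^ 2) * z +
          ((q : ℚ_[p]) - m) ^ 2 = 0) ∧
        0 < ‖z - 1‖ ∧ ‖z - 1‖ < 1) ∧
    (‖(θ - 1) ^ 2 - (q : ℚ_[p]) ^ 2‖ = ‖(q : ℚ_[p])‖ ^ 2 →
      ¬ ∃ z : ℚ_[p],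
        ((m : ℚ_[p]) ^ 2 * z ^ 2 +
          (2 * (m : ℚ_[p]) * ((q : ℚ_[p]) - m) - (θ - 1) ^ 2) * z +
          ((q : ℚ_[p]) - m) ^ 2 = 0) ∧
        0 < ‖z - 1‖ ∧ ‖z - 1‖ < 1) := by
  obtain ⟨hmt, htq⟩ := hnorm
  generalize ht : θ - 1 = t at *
  have htpos : 0 < ‖t‖ := (norm_nonneg _).trans_lt hmt
  have ht0 : t ≠ 0 := norm_pos_iff.mp htpos
  have ha : ‖(m : ℚ_[p]) / t‖ < 1 := by rw [norm_div, div_lt_one htpos]; exact hmt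
  have hb : ‖(q : ℚ_[p]) / t‖ ≤ 1 := by rw [norm_div, ← htq, div_self htpos.ne']
  obtain ⟨a, hae⟩ : ∃ a : ℤ_[p], (a : ℚ_[p]) = m / t := ⟨⟨_, ha.le⟩, rfl⟩
  obtain ⟨b, hbe⟩ : ∃ b : ℤ_[p], (b : ℚ_[p]) = q / t := ⟨⟨_, hb⟩, rfl⟩
  have hm' : (m : ℚ_[p]) = a * t := by rw [hae, div_mul_cancel₀ _ ht0]
  have hq' : (q : ℚ_[p]) = b * t := by rw [hbe, div_mul_cancel₀ _ ht0]
  have ha1 : ‖a‖ < 1 := by rw [PadicInt.norm_def, hae]; exact ha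
  have hnb : ‖t ^ 2 - (q : ℚ_[p]) ^ 2‖ = ‖b ^ 2 - 1‖ * ‖(q : ℚ_[p])‖ ^ 2 := by
    rw [← htq, PadicInt.norm_def, ← norm_pow, ← norm_mul, ← norm_neg, hq']
    push_cast
    congr 1
    ring
  have hq0 : 0 < ‖(q : ℚ_[p])‖ ^ 2 := by rw [← htq]; positivity
  have key (w : ℤ_[p]) :
      ((m : ℚ_[p]) ^ 2 * (1 + w : ℚ_[p]) ^ 2 +
          (2 * (m : ℚ_[p]) * ((q : ℚ_[p]) - m) - t ^ 2) * (1 + w) +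
          ((q : ℚ_[p]) - m) ^ 2 = 0) ↔
        a ^ 2 * w ^ 2 + (2 * a * b - 1) * w + (b ^ 2 - 1) = 0 := by
    have e : (m : ℚ_[p]) ^ 2 * (1 + w : ℚ_[p]) ^ 2 +
          (2 * (m : ℚ_[p]) * ((q : ℚ_[p]) - m) - t ^ 2) * (1 + w) +
          ((q : ℚ_[p]) - m) ^ 2 = t ^ 2 *
        ((a ^ 2 * w ^ 2 + (2 * a * b - 1) * w + (b ^ 2 - 1) : ℤ_[p]) : ℚ_[p]) := by
      have h2 : ((2 : ℤ_[p]) : ℚ_[p]) = 2 := rfl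
      rw [hm', hq']
      push_cast
      rw [h2]
      ring
    rw [e, mul_eq_zero, or_iff_right (pow_ne_zero 2 ht0), PadicInt.coe_eq_zero]
  have lift_w (z : ℚ_[p]) (hz : ‖z - 1‖ < 1) : ∃ w : ℤ_[p], z = 1 + w ∧ ‖w‖ < 1 :=
    ⟨⟨z - 1, hz.le⟩, (add_sub_cancel 1 z).symm, hz⟩
  constructor
  · intro h
    rw [hnb, mul_lt_iff_lt_one_left hq0] at h
    obtain ⟨w, ⟨hw, hw1⟩, huniq⟩ := existsUnique_small_root p a b ha1 h
    refine ⟨1 + w, ⟨(key w).2 hw, ?_, ?_⟩, ?_⟩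
    · rw [add_sub_cancel_left, norm_pos_iff]
      intro hw0
      rw [PadicInt.coe_eq_zero] at hw0
      subst hw0
      -- `w = 0` would mean `t² = q²`.
      have hb1 : b ^ 2 = 1 := by linear_combination hw
      rcases mul_self_eq_one_iff.mp ((sq b).symm.trans hb1) with rfl | rfl
      · exact hθ1 (by rw [hq']; push_cast; linear_combination ht)
      · exact hθ2 (by rw [hq']; push_cast; linear_combination ht)
    · rwa [add_sub_cancel_left]
    · rintro z ⟨hz, -, hz1⟩
      obtain ⟨v, rfl, hv⟩ := lift_w z hz1
      rw [huniq v ⟨(key v).1 hz, hv⟩]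
  · rintro h ⟨z, hz, -, hz1⟩
    obtain ⟨v, rfl, hv⟩ := lift_w z hz1
    have hlt := norm_const_lt_one p a b v hv ((key v).1 hz)
    rw [← mul_lt_iff_lt_one_left hq0, ← hnb] at hlt
    exact hlt.ne h
end

section
/- Let p be an odd prime, let q ≥ 2 be an integer divisible by p, let θ ∈ ℚ_p satisfy |θ−1|_p ≤ 1/p, θ ≠ 1+q and θ ≠ 1−q, and let m be an integer with 1 ≤ m ≤ q−1 such that |m|_p = |θ−1|_p = |q|_p, |(θ−1)² − q²|_p < |q|_p², and |q − 2m|_p < |q|_p. Then the equation m²·z² + (2m(q−m) − (θ−1)²)·z + (q−m)² = 0 has a solution z ∈ ℚ_p with 0 < |z−1|_p < 1 if and only if (θ−1)² − 4m(q−m) is a square in ℚ_p; moreover, in that case every root z ∈ ℚ_p of the equation satisfies 0 < |z−1|_p < 1. -/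
/-!
Put `t = θ - 1`. The quadratic has discriminant `t² (t² - 4m(q - m))` with `t ≠ 0`, so it has a root
exactly when `t² - 4m(q - m)` is a square. In the variable `w = z - 1` it reads
`m² w² + (2mq - t²) w + (q² - t²) = 0`. Here `2mq - t² = (q² - t²) - q(q - 2m)`, so both lower
coefficients are strictly smaller than `m²` in norm and the ultrametric inequality forces `‖w‖ < 1`
for every root; `w = 0` is excluded because `t ≠ ±q`.
-/

/-- A quadratic over `ℚ_[p]` whose leading coefficient strictly dominates the other two has all its
roots in the open unit ball. -/
lemma norm_lt_one_of_dominant_leading {p : ℕ} [Fact p.Prime] {a b c w : ℚ_[p]}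
    (hb : ‖b‖ < ‖a‖) (hc : ‖c‖ < ‖a‖) (h : a * w ^ 2 + b * w + c = 0) : ‖w‖ < 1 := by
  by_contra! hw
  have e : a * w ^ 2 = -(b * w + c) := by linear_combination h
  have e2 : ‖a‖ * ‖w‖ ^ 2 = ‖b * w + c‖ := by rw [← norm_neg (b * w + c), ← e]; simp
  have h3 : ‖b * w + c‖ ≤ max ‖b * w‖ ‖c‖ := IsUltrametricDist.norm_add_le_max _ _
  rw [norm_mul] at h3
  have ha : 0 < ‖a‖ := (norm_nonneg b).trans_lt hb
  rcases le_max_iff.1 h3 with h4 | h4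
  · have : ‖b‖ * ‖w‖ < ‖a‖ * ‖w‖ := by gcongr
    nlinarith [mul_nonneg ha.le (mul_nonneg (norm_nonneg w) (sub_nonneg.2 hw))]
  · nlinarith [mul_nonneg ha.le (sub_nonneg.2 (one_le_pow₀ hw (n := 2)))]

/-- Proposition 8(10): for odd `p`, `p ∣ q`, `θ ∉ {1 ± q}` with
`‖m‖ = ‖θ - 1‖ = ‖q‖`, `‖(θ-1)² - q²‖ < ‖q‖²` and `‖q - 2m‖ < ‖q‖`:
(kv) has a solution with `0 < ‖z - 1‖ < 1` iff the discriminant is a square,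
and in that case every root lies in `{z : 0 < ‖z - 1‖ < 1}`. -/
theorem kv_solutions_case10 (p : ℕ) [Fact p.Prime] (hp : p ≠ 2)
    (q : ℕ) (hq : 2 ≤ q) (hpq : p ∣ q)
    (θ : ℚ_[p]) (hθ : ‖θ - 1‖ ≤ 1 / p)
    (hθ1 : θ ≠ 1 + q) (hθ2 : θ ≠ 1 - q)
    (m : ℕ) (hm1 : 1 ≤ m) (hm2 : m ≤ q - 1)
    (hnorm : ‖(m : ℚ_[p])‖ = ‖θ - 1‖ ∧ ‖θ - 1‖ = ‖(q : ℚ_[p])‖)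
    (hd : ‖(θ - 1) ^ 2 - (q : ℚ_[p]) ^ 2‖ < ‖(q : ℚ_[p])‖ ^ 2)
    (h2m : ‖(q : ℚ_[p]) - 2 * m‖ < ‖(q : ℚ_[p])‖) :
    ((∃ z : ℚ_[p],
        ((m : ℚ_[p]) ^ 2 * z ^ 2 +
          (2 * (m : ℚ_[p]) * ((q : ℚ_[p]) - m) - (θ - 1) ^ 2) * z +
          ((q : ℚ_[p]) - m) ^ 2 = 0) ∧
        0 < ‖z - 1‖ ∧ ‖z - 1‖ < 1) ↔
      (∃ d : ℚ_[p], d ^ 2 = (θ - 1) ^ 2 - 4 * m * ((q : ℚ_[p]) - m))) ∧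
    ((∃ d : ℚ_[p], d ^ 2 = (θ - 1) ^ 2 - 4 * m * ((q : ℚ_[p]) - m)) →
      ∀ z : ℚ_[p],
        ((m : ℚ_[p]) ^ 2 * z ^ 2 +
          (2 * (m : ℚ_[p]) * ((q : ℚ_[p]) - m) - (θ - 1) ^ 2) * z +
          ((q : ℚ_[p]) - m) ^ 2 = 0) →
        0 < ‖z - 1‖ ∧ ‖z - 1‖ < 1) := by
  obtain ⟨hmt, htq⟩ := hnorm
  have hm0 : (m : ℚ_[p]) ≠ 0 := Nat.cast_ne_zero.2 (by omega)
  have ht0 : θ - 1 ≠ 0 := by rw [← norm_pos_iff, ← hmt]; exact norm_pos_iff.2 hm0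
  have ha : ‖(m : ℚ_[p]) ^ 2‖ = ‖(q : ℚ_[p])‖ ^ 2 := by rw [norm_pow, hmt, htq]
  have hq0 : 0 < ‖(q : ℚ_[p])‖ := by rw [← htq]; exact norm_pos_iff.2 ht0
  have hc : ‖(q : ℚ_[p]) ^ 2 - (θ - 1) ^ 2‖ < ‖(m : ℚ_[p]) ^ 2‖ := by
    rw [ha, norm_sub_rev]; exact hd
  have hb : ‖2 * (m : ℚ_[p]) * q - (θ - 1) ^ 2‖ < ‖(m : ℚ_[p]) ^ 2‖ := by
    have e : 2 * (m : ℚ_[p]) * q - (θ - 1) ^ 2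
        = ((q : ℚ_[p]) ^ 2 - (θ - 1) ^ 2) + -(q * (q - 2 * m)) := by ring
    rw [e]
    refine (IsUltrametricDist.norm_add_le_max _ _).trans_lt (max_lt hc ?_)
    rw [norm_neg, norm_mul, ha, sq]
    gcongr
  have key : ∀ z : ℚ_[p],
      ((m : ℚ_[p]) ^ 2 * z ^ 2 +
        (2 * (m : ℚ_[p]) * ((q : ℚ_[p]) - m) - (θ - 1) ^ 2) * z +
        ((q : ℚ_[p]) - m) ^ 2 = 0) → 0 < ‖z - 1‖ ∧ ‖z - 1‖ < 1 := by
    intro z hz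
    have hw : (m : ℚ_[p]) ^ 2 * (z - 1) ^ 2 + (2 * (m : ℚ_[p]) * q - (θ - 1) ^ 2) * (z - 1)
        + ((q : ℚ_[p]) ^ 2 - (θ - 1) ^ 2) = 0 := by linear_combination hz
    refine ⟨norm_pos_iff.2 fun h0 => ?_, norm_lt_one_of_dominant_leading hb hc hw⟩
    rw [h0] at hw
    have hsq : (θ - 1) ^ 2 = (q : ℚ_[p]) ^ 2 := by linear_combination -hw
    rcases sq_eq_sq_iff_eq_or_eq_neg.1 hsq with h | h
    · exact hθ1 (by linear_combination h)
    · exact hθ2 (by linear_combination h)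
  refine ⟨⟨?_, ?_⟩, fun _ => key⟩
  · rintro ⟨z, hz, -⟩
    -- completing the square: `2m²z + B = ± t d`, where `B` is the linear coefficient
    refine ⟨(2 * (m : ℚ_[p]) ^ 2 * z
      + (2 * (m : ℚ_[p]) * ((q : ℚ_[p]) - m) - (θ - 1) ^ 2)) / (θ - 1), ?_⟩
    rw [div_pow, div_eq_iff (pow_ne_zero 2 ht0)]
    linear_combination 4 * (m : ℚ_[p]) ^ 2 * hz
  · rintro ⟨d, hd'⟩
    have hz : (m : ℚ_[p]) ^ 2 * (((θ - 1) * d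
        - (2 * (m : ℚ_[p]) * ((q : ℚ_[p]) - m) - (θ - 1) ^ 2)) / (2 * (m : ℚ_[p]) ^ 2)) ^ 2 +
        (2 * (m : ℚ_[p]) * ((q : ℚ_[p]) - m) - (θ - 1) ^ 2) * (((θ - 1) * d
        - (2 * (m : ℚ_[p]) * ((q : ℚ_[p]) - m) - (θ - 1) ^ 2)) / (2 * (m : ℚ_[p]) ^ 2)) +
        ((q : ℚ_[p]) - m) ^ 2 = 0 := by
      field_simp
      linear_combination (θ - 1) ^ 2 * hd'
    exact ⟨_, hz, key _ hz⟩
end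

section
/- Let q ≥ 2 be an integer with |q|_2 > 1/4 (i.e., q is not divisible by 4), and let θ ∈ ℚ_2 satisfy |θ−1|_2 ≤ 1/4. Then for every integer m with 1 ≤ m ≤ q−1, the equation m²·z² + (2m(q−m) − (θ−1)²)·z + (q−m)² = 0 has no solution z ∈ ℚ_2 with 0 < |z−1|_2 < 1/2. -/
/-!
Completing the square, the equation reads `(m z + (q - m))² = (θ - 1)² z`. If `‖z - 1‖ < 1/2` then
`‖z‖ ≤ 1`, so `‖m z + (q - m)‖ ≤ ‖θ - 1‖ ≤ 1/4`. By discreteness of the norm `‖z - 1‖ ≤ 1/4`, so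
`q = (m z + (q - m)) - m (z - 1)` has norm at most `1/4`, contradicting the hypothesis on `q`.
-/


/-- Proposition: over `ℚ_2`, if `‖q‖₂ > 1/4` (i.e. `4 ∤ q`) then (kv) has no
solution `z` with `0 < ‖z - 1‖₂ < 1/2`. -/
theorem kv2_no_solution_of_norm_q (q : ℕ) (hq : 2 ≤ q)
    (hq2 : ‖(q : ℚ_[2])‖ > 1 / 4)
    (θ : ℚ_[2]) (hθ : ‖θ - 1‖ ≤ 1 / 4)
    (m : ℕ) (hm1 : 1 ≤ m) (hm2 : m ≤ q - 1) :
    ¬ ∃ z : ℚ_[2],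
      ((m : ℚ_[2]) ^ 2 * z ^ 2 +
        (2 * (m : ℚ_[2]) * ((q : ℚ_[2]) - m) - (θ - 1) ^ 2) * z +
        ((q : ℚ_[2]) - m) ^ 2 = 0) ∧
      0 < ‖z - 1‖ ∧ ‖z - 1‖ < 1 / 2 := by
  rintro ⟨z, hz, -, hz2⟩
  -- the norm takes values in powers of `2`
  have hw : ‖z - 1‖ ≤ 1 / 4 := by
    have h := (Padic.norm_le_pow_iff_norm_lt_pow_add_one (p := 2) (z - 1) (-2)).2
      (by norm_num; linarith)
    norm_num at h
    linarith
  have hz1 : ‖z‖ ≤ 1 := by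
    have h := Padic.nonarchimedean (p := 2) (z - 1) 1
    rw [sub_add_cancel, norm_one] at h
    exact h.trans (max_le (by linarith) le_rfl)
  have hsq : ((m : ℚ_[2]) * z + (q - m)) ^ 2 = (θ - 1) ^ 2 * z := by
    linear_combination hz
  have hA : ‖(m : ℚ_[2]) * z + (q - m)‖ ≤ 1 / 4 := by
    have h := congrArg norm hsq
    rw [norm_mul, norm_pow, norm_pow] at h
    refine le_trans (abs_le_of_sq_le_sq' ?_ (norm_nonneg (θ - 1))).2 hθ
    rw [h]
    exact mul_le_of_le_one_right (sq_nonneg _) hz1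
  have hB : ‖-((m : ℚ_[2]) * (z - 1))‖ ≤ 1 / 4 := by
    have hm : ‖(m : ℚ_[2])‖ ≤ 1 := by
      simpa using Padic.norm_int_le_one (p := 2) (m : ℤ)
    rw [norm_neg, norm_mul]
    exact (mul_le_of_le_one_left (norm_nonneg _) hm).trans hw
  have h := Padic.nonarchimedean (p := 2) ((m : ℚ_[2]) * z + (q - m)) (-((m : ℚ_[2]) * (z - 1)))
  rw [show (m : ℚ_[2]) * z + (q - m) + -((m : ℚ_[2]) * (z - 1)) = q by ring] at h
  exact absurd (h.trans (max_le hA hB)) (not_le.2 hq2)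
end

section
/- Let q ≥ 2 be an integer and let θ = 1 + q or θ = 1 − q (in ℚ_2), and let m be an integer with 1 ≤ m ≤ q−1. If |m|_2 > |q|_2 and q ≠ 2m, then the equation m²·z² + (2m(q−m) − (θ−1)²)·z + (q−m)² = 0 has exactly one solution z ∈ ℚ_2 with 0 < |z−1|_2 < 1/2, namely z = ((q−m)/m)²; otherwise (i.e., if |m|_2 ≤ |q|_2 or q = 2m) it has no solution z with 0 < |z−1|_2 < 1/2. -/
/-!
For `θ = 1 ± q` the left side of the equation factors as `m² (z - 1) (z - ((q - m)/m)²)`, so the only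
root other than `1` that can occur is `((q - m)/m)²`. Writing `t = q/m`, its distance to `1` is
`‖((q - m)/m)² - 1‖ = ‖t‖ * ‖t - 2‖`. If `‖t‖ < 1`, the norm being discrete gives `‖t‖ ≤ 1/2` and
`‖t - 2‖ ≤ 1/2`, so the distance is at most `1/4`. If `‖t‖ ≥ 1 > ‖2‖`, then `‖t - 2‖ = ‖t‖` and the
distance is at least `1`. It vanishes exactly when `t = 2`, since `q ≠ 0`.
-/

lemma norm_two_padic : ‖(2 : ℚ_[2])‖ = 1 / 2 := by
  have h := Padic.norm_p (p := 2)
  norm_num at h ⊢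
  exact h

/-- Both factors have norm at most `1/2`; the bound
`‖t‖ ≤ 1/2` uses that the norm takes no value strictly between `1/2` and `1`. -/
lemma norm_mul_sub_two_lt {t : ℚ_[2]} (ht : ‖t‖ < 1) : ‖t * (t - 2)‖ < 1 / 2 := by
  have h1 : ‖t‖ ≤ 1 / 2 := by
    have h := (Padic.norm_le_pow_iff_norm_lt_pow_add_one t (-1)).2 (by simpa using ht)
    norm_num at h ⊢
    exact h
  have h2 : ‖t - 2‖ ≤ 1 / 2 := by
    have h := Padic.nonarchimedean t (-2)
    rw [norm_neg, norm_two_padic, ← sub_eq_add_neg] at h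
    exact h.trans (max_le h1 le_rfl)
  rw [norm_mul]
  nlinarith [norm_nonneg t, norm_nonneg (t - 2)]

lemma one_le_norm_mul_sub_two {t : ℚ_[2]} (ht : 1 ≤ ‖t‖) : 1 ≤ ‖t * (t - 2)‖ := by
  have h2 : 1 ≤ ‖t - 2‖ := by
    by_contra! hlt
    have h := Padic.nonarchimedean (t - 2) 2
    rw [sub_add_cancel, norm_two_padic] at h
    exact absurd (ht.trans h) (not_le.2 (max_lt hlt (by norm_num)))
  rw [norm_mul]
  nlinarith

/-- The factorization of the quadratic, read off on its roots. -/
lemma kv2_root_iff {q m θ z : ℚ_[2]} (hm : m ≠ 0) (hθ : θ = 1 + q ∨ θ = 1 - q) :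
    m ^ 2 * z ^ 2 + (2 * m * (q - m) - (θ - 1) ^ 2) * z + (q - m) ^ 2 = 0 ↔
      z = 1 ∨ z = ((q - m) / m) ^ 2 := by
  have hs : (θ - 1) ^ 2 = q ^ 2 := by
    rcases hθ with rfl | rfl <;> ring
  have hf : m ^ 2 * z ^ 2 + (2 * m * (q - m) - (θ - 1) ^ 2) * z + (q - m) ^ 2 =
      m ^ 2 * ((z - 1) * (z - ((q - m) / m) ^ 2)) := by
    rw [hs]
    field_simp
    ring
  rw [hf, mul_eq_zero, mul_eq_zero, sub_eq_zero, sub_eq_zero]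
  simp [hm]


/-- Proposition: over `ℚ_2` with `θ ∈ {1 ± q}`: (kv) has exactly one solution
with `0 < ‖z - 1‖₂ < 1/2`, namely `((q - m)/m)²`, iff `‖m‖₂ > ‖q‖₂` and
`q ≠ 2m`; otherwise none. -/
theorem kv2_solutions_theta_special (q : ℕ) (hq : 2 ≤ q)
    (θ : ℚ_[2]) (hθ : θ = 1 + q ∨ θ = 1 - q)
    (m : ℕ) (hm1 : 1 ≤ m) (hm2 : m ≤ q - 1) :
    ((‖(m : ℚ_[2])‖ > ‖(q : ℚ_[2])‖ ∧ q ≠ 2 * m) →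
      ∀ z : ℚ_[2],
        ((((m : ℚ_[2]) ^ 2 * z ^ 2 +
          (2 * (m : ℚ_[2]) * ((q : ℚ_[2]) - m) - (θ - 1) ^ 2) * z +
          ((q : ℚ_[2]) - m) ^ 2 = 0) ∧ 0 < ‖z - 1‖ ∧ ‖z - 1‖ < 1 / 2) ↔
        z = (((q : ℚ_[2]) - m) / m) ^ 2)) ∧
    ((‖(m : ℚ_[2])‖ ≤ ‖(q : ℚ_[2])‖ ∨ q = 2 * m) →
      ¬ ∃ z : ℚ_[2],
        (((m : ℚ_[2]) ^ 2 * z ^ 2 +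
          (2 * (m : ℚ_[2]) * ((q : ℚ_[2]) - m) - (θ - 1) ^ 2) * z +
          ((q : ℚ_[2]) - m) ^ 2 = 0) ∧ 0 < ‖z - 1‖ ∧ ‖z - 1‖ < 1 / 2)) := by
  have hm0 : (m : ℚ_[2]) ≠ 0 := by
    exact_mod_cast (by omega : m ≠ 0)
  have hq0 : (q : ℚ_[2]) ≠ 0 := by
    exact_mod_cast (by omega : q ≠ 0)
  have hdist : (((q : ℚ_[2]) - m) / m) ^ 2 - 1 = (q / m : ℚ_[2]) * (q / m - 2) := by
    field_simp
    ring
  have hmpos : 0 < ‖(m : ℚ_[2])‖ := norm_pos_iff.2 hm0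
  refine ⟨?_, ?_⟩
  · rintro ⟨hlt, hne⟩ z
    rw [kv2_root_iff hm0 hθ]
    constructor
    · rintro ⟨rfl | hz, hpos, -⟩
      · simp at hpos
      · exact hz
    · rintro rfl
      rw [hdist]
      refine ⟨Or.inr rfl, norm_pos_iff.2 (mul_ne_zero (div_ne_zero hq0 hm0) ?_),
        norm_mul_sub_two_lt ?_⟩
      · rw [sub_ne_zero, ne_eq, div_eq_iff hm0]
        exact_mod_cast hne
      · rw [norm_div]
        exact (div_lt_one hmpos).2 hlt
  · rintro h ⟨z, hz, hpos, hlt⟩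
    rcases (kv2_root_iff hm0 hθ).1 hz with rfl | rfl
    · simp at hpos
    rw [hdist] at hpos hlt
    rcases h with hle | rfl
    · have h1 : 1 ≤ ‖(q / m : ℚ_[2])‖ := by
        rw [norm_div]
        exact (one_le_div hmpos).2 hle
      linarith [one_le_norm_mul_sub_two h1]
    · have h2 : ((2 * m : ℕ) : ℚ_[2]) / m = 2 := by
        push_cast
        field_simp
      rw [h2, sub_self, mul_zero, norm_zero] at hpos
      exact lt_irrefl _ hpos
end

section
/- Let q ≥ 2 be an integer, let θ ∈ ℚ_2 satisfy |θ−1|_2 ≤ 1/4, θ ≠ 1+q and θ ≠ 1−q, and let m be an integer with 1 ≤ m ≤ q−1. If |m|_2 = |θ−1|_2 = |q|_2, or if |θ−1|_2 = |q|_2 > |m|_2, then the equation m²·z² + (2m(q−m) − (θ−1)²)·z + (q−m)² = 0 has exactly one solution z ∈ ℚ_2 with 0 < |z−1|_2 < 1/2. -/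
/-!
With `z = 1 + y` and `t = θ - 1`, equation (kv) divided by `t²` becomes
`M² y² + (2MU - 1) y + (U² - 1) = 0`, where `M = m / t` is a 2-adic integer and `U = q / t` is a
2-adic unit. The linear coefficient is a unit, so this quadratic has at most one root in the
maximal ideal (`two_dvd_root_unique`). As `U` is odd, `U² - 1` is divisible by `8`, and Hensel's
lemma, applied after the substitution `y = 4w`, gives a root divisible by `4` (`exists_root`).
That root is nonzero because `θ ≠ 1 ± q` means `U² ≠ 1`.
-/

theorem two_dvd_iff (x : ℤ_[2]) : (2 : ℤ_[2]) ∣ x ↔ ‖x‖ < 1 := by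
  simpa using (PadicInt.norm_lt_one_iff_dvd x).symm

/-- The residue field of `ℤ_2` has two elements. -/
theorem two_dvd_sub_one {U : ℤ_[2]} (hU : ‖U‖ = 1) : (2 : ℤ_[2]) ∣ U - 1 := by
  obtain ⟨n, hn, h⟩ := PadicInt.exists_mem_range U
  rw [IsLocalRing.mem_maximalIdeal, PadicInt.mem_nonunits] at h
  interval_cases n
  · simp [hU] at h
  · exact (two_dvd_iff _).2 (by simpa using h)

theorem norm_sub_one_of_two_dvd {x : ℤ_[2]} (hx : (2 : ℤ_[2]) ∣ x) : ‖x - 1‖ = 1 := by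
  refine le_antisymm (PadicInt.norm_le_one _) (not_lt.1 fun h => ?_)
  have h1 : (2 : ℤ_[2]) ∣ 1 := by
    simpa using dvd_sub hx ((two_dvd_iff _).2 h)
  simpa using (two_dvd_iff 1).1 h1

open Polynomial in
/-- After the substitution `y = 4w` the quadratic can be divided by `4`, and its reduction modulo `2`
has the simple root `w = 0`. -/
theorem exists_root (M U : ℤ_[2]) (hU : ‖U‖ = 1) :
    ∃ w : ℤ_[2], M ^ 2 * (4 * w) ^ 2 + (2 * M * U - 1) * (4 * w) + (U ^ 2 - 1) = 0 := by
  obtain ⟨s, hs⟩ := two_dvd_sub_one hU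
  obtain rfl : U = 2 * s + 1 := by linear_combination hs
  -- `U² - 1 = 4 s (s + 1)`, and one of `s`, `s + 1` is even.
  have hk : ‖s * (s + 1)‖ < 1 := by
    rw [← two_dvd_iff]
    rcases (PadicInt.norm_le_one s).lt_or_eq with h | h
    · exact dvd_mul_of_dvd_left ((two_dvd_iff s).2 h) _
    · obtain ⟨r, hr⟩ := two_dvd_sub_one h
      exact ⟨s * (r + 1), by linear_combination s * hr⟩
  let F : ℤ_[2][X] := C (4 * M ^ 2) * X ^ 2 + C (2 * M * (2 * s + 1) - 1) * X + C (s * (s + 1))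
  have hF' : ‖F.derivative.aeval (0 : ℤ_[2])‖ = 1 := by
    have : F.derivative.aeval (0 : ℤ_[2]) = 2 * (M * (2 * s + 1)) - 1 := by
      simp [F, mul_assoc]
    rw [this]
    exact norm_sub_one_of_two_dvd (dvd_mul_right _ _)
  have hF : ‖F.aeval (0 : ℤ_[2])‖ < ‖F.derivative.aeval (0 : ℤ_[2])‖ ^ 2 := by
    rw [hF']
    simpa [F] using hk
  obtain ⟨w, hw, -⟩ := hensels_lemma hF
  refine ⟨w, ?_⟩
  have hw' : 4 * M ^ 2 * w ^ 2 + (2 * M * (2 * s + 1) - 1) * w + s * (s + 1) = 0 := by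
    rw [← hw]
    simp [F]
  linear_combination 4 * hw'

/-- The difference of the two equations is `a - b` times an odd 2-adic integer. -/
theorem two_dvd_root_unique {M U a b : ℤ_[2]} (ha : (2 : ℤ_[2]) ∣ a) (hb : (2 : ℤ_[2]) ∣ b)
    (ea : M ^ 2 * a ^ 2 + (2 * M * U - 1) * a + (U ^ 2 - 1) = 0)
    (eb : M ^ 2 * b ^ 2 + (2 * M * U - 1) * b + (U ^ 2 - 1) = 0) : a = b := by
  have h : (a - b) * (M ^ 2 * (a + b) + 2 * (M * U) - 1) = 0 := by
    linear_combination ea - eb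
  rcases mul_eq_zero.1 h with h | h
  · exact sub_eq_zero.1 h
  · have := norm_sub_one_of_two_dvd
      (dvd_add (dvd_mul_of_dvd_right (dvd_add ha hb) (M ^ 2)) (dvd_mul_right 2 (M * U)))
    simp [h] at this


/-- Proposition: over `ℚ_2` with `θ ∉ {1 ± q}`, if `‖m‖₂ = ‖θ-1‖₂ = ‖q‖₂` or
`‖θ-1‖₂ = ‖q‖₂ > ‖m‖₂`, then (kv) has exactly one solution `z` with
`0 < ‖z - 1‖₂ < 1/2`. -/
theorem kv2_one_solution (q : ℕ) (hq : 2 ≤ q)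
    (θ : ℚ_[2]) (hθ : ‖θ - 1‖ ≤ 1 / 4)
    (hθ1 : θ ≠ 1 + q) (hθ2 : θ ≠ 1 - q)
    (m : ℕ) (hm1 : 1 ≤ m) (hm2 : m ≤ q - 1)
    (hnorm : (‖(m : ℚ_[2])‖ = ‖θ - 1‖ ∧ ‖θ - 1‖ = ‖(q : ℚ_[2])‖) ∨
      (‖θ - 1‖ = ‖(q : ℚ_[2])‖ ∧ ‖(q : ℚ_[2])‖ > ‖(m : ℚ_[2])‖)) :
    ∃! z : ℚ_[2],
      ((m : ℚ_[2]) ^ 2 * z ^ 2 +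
        (2 * (m : ℚ_[2]) * ((q : ℚ_[2]) - m) - (θ - 1) ^ 2) * z +
        ((q : ℚ_[2]) - m) ^ 2 = 0) ∧
      0 < ‖z - 1‖ ∧ ‖z - 1‖ < 1 / 2 := by
  set t : ℚ_[2] := θ - 1 with ht
  have hq0 : (q : ℚ_[2]) ≠ 0 := by
    exact_mod_cast (by omega : q ≠ 0)
  obtain ⟨htq, hmt⟩ : ‖t‖ = ‖(q : ℚ_[2])‖ ∧ ‖(m : ℚ_[2])‖ ≤ ‖t‖ := by
    rcases hnorm with ⟨h1, h2⟩ | ⟨h1, h2⟩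
    · exact ⟨h2, h1.le⟩
    · exact ⟨h1, h1 ▸ h2.le⟩
  have hn : 0 < ‖t‖ := htq ▸ norm_pos_iff.2 hq0
  have ht0 : t ≠ 0 := norm_pos_iff.1 hn
  obtain ⟨M, hM⟩ : ∃ M : ℤ_[2], (m : ℚ_[2]) = t * M :=
    ⟨⟨m / t, by rw [norm_div]; exact div_le_one_of_le₀ hmt hn.le⟩, (mul_div_cancel₀ _ ht0).symm⟩
  obtain ⟨U, hU, hU1⟩ : ∃ U : ℤ_[2], (q : ℚ_[2]) = t * U ∧ ‖U‖ = 1 := by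
    have h1 : ‖(q : ℚ_[2]) / t‖ = 1 := by rw [norm_div, htq, div_self (htq ▸ hn.ne')]
    exact ⟨⟨q / t, h1.le⟩, (mul_div_cancel₀ _ ht0).symm, h1⟩
  -- Equation (kv) at `z = 1 + y` is `t²` times the normalized quadratic.
  have key (y : ℤ_[2]) : (m : ℚ_[2]) ^ 2 * (1 + y) ^ 2 +
        (2 * (m : ℚ_[2]) * ((q : ℚ_[2]) - m) - t ^ 2) * (1 + y) + ((q : ℚ_[2]) - m) ^ 2 = 0 ↔
      M ^ 2 * y ^ 2 + (2 * M * U - 1) * y + (U ^ 2 - 1) = 0 := by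
    have h : (m : ℚ_[2]) ^ 2 * (1 + y) ^ 2 +
        (2 * (m : ℚ_[2]) * ((q : ℚ_[2]) - m) - t ^ 2) * (1 + y) + ((q : ℚ_[2]) - m) ^ 2 =
        t ^ 2 * ((M ^ 2 * y ^ 2 + (2 * M * U - 1) * y + (U ^ 2 - 1) : ℤ_[2]) : ℚ_[2]) := by
      have h2 : ((2 : ℤ_[2]) : ℚ_[2]) = 2 := rfl
      push_cast
      rw [hM, hU, h2]
      ring
    rw [h, mul_eq_zero, or_iff_right (pow_ne_zero 2 ht0), PadicInt.coe_eq_zero]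
  obtain ⟨w, hw⟩ := exists_root M U hU1
  refine ⟨1 + ((4 * w : ℤ_[2]) : ℚ_[2]), ⟨(key _).2 hw, ?_, ?_⟩, ?_⟩
  · rw [add_sub_cancel_left, norm_pos_iff, Ne, PadicInt.coe_eq_zero]
    intro h0
    rw [h0] at hw
    have h1 : (U - 1) * (U + 1) = 0 := by linear_combination hw
    rcases mul_eq_zero.1 h1 with h | h
    · refine hθ1 ?_
      rw [hU, sub_eq_zero.1 h]
      simp [ht]
    · refine hθ2 ?_
      rw [hU, eq_neg_of_add_eq_zero_left h]
      simp [ht]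
  · have h2 : ‖(2 : ℤ_[2])‖ = 2⁻¹ := by simpa using PadicInt.norm_p (p := 2)
    rw [add_sub_cancel_left, PadicInt.padic_norm_e_of_padicInt,
      show (4 : ℤ_[2]) * w = 2 * 2 * w by ring, norm_mul, norm_mul, h2]
    linarith [PadicInt.norm_le_one w]
  · rintro z ⟨hz, -, hz1⟩
    obtain ⟨y, hy⟩ : ∃ y : ℤ_[2], (y : ℚ_[2]) = z - 1 := ⟨⟨z - 1, by linarith⟩, rfl⟩
    obtain rfl : z = 1 + y := by rw [hy]; ring
    have hy2 : (2 : ℤ_[2]) ∣ y := by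
      rw [two_dvd_iff, ← PadicInt.padic_norm_e_of_padicInt, hy]
      linarith
    rw [two_dvd_root_unique hy2 ⟨2 * w, by ring⟩ ((key y).1 hz) hw]
end
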